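/- There exists a positive constant C⋆ = C⋆(d) such that for every u ∈ H¹(ℝ^d) ∩ L¹((1+|x|)dx) with ∫_{ℝ^d} u dx = 0, one has ‖u‖²_{L²(dx)} ≤ C⋆ ‖x u‖_{L¹(dx)}^{4/(d+4)} ‖∇u‖_{L²(dx)}^{2(d+2)/(d+4)}. -/

import Mathlib

open MeasureTheory Real

noncomputable section

/-!
Let `φ` be a smooth probability density supported in the ball of radius `r`, and let
`P = ∬ φ (y - x) ⟪u x, u y⟫`. Substituting `y = x + z` shows that `P` averages the correlations
`∫ ⟪u x, u (x + z)⟫` over `‖z‖ ≤ r`, and each of these is at least `‖u‖₂² - r² / 2 * ‖∇u‖₂²`,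
because `‖u (· + z) - u‖₂ ≤ ‖z‖ ‖∇u‖₂`. On the other hand, as `u` has mean zero, functions of `x`
alone or of `y` alone may be subtracted from `φ (y - x)` without changing `P`. This turns the
weight into a mixed second difference of size `O(r⁻ⁿ⁻² ‖x‖ ‖y‖)`, `n` being the dimension, so that
`P ≤ K r⁻ⁿ⁻² ‖x u‖₁²`. Optimizing in `r` gives the inequality.
-/

open Metric Module Function
open scoped ENNReal RealInnerProductSpace

section RealAnalysis

lemma le_two_mul_rpow_mul_rpow_of_forall_le_of_pos {U A B a b : ℝ} (hA : 0 < A) (hB : 0 < B)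
    (ha : 0 < a) (hb : 0 < b) (h : ∀ r, 0 < r → U ≤ A * r ^ a + B * r ^ (-b)) :
    U ≤ 2 * (A ^ (b / (a + b)) * B ^ (a / (a + b))) := by
  -- The two terms on the right-hand side of `h` coincide at this `r`.
  have hAB := h ((B / A) ^ (1 / (a + b))) (by positivity)
  have hfst : A * ((B / A) ^ (1 / (a + b))) ^ a = A ^ (b / (a + b)) * B ^ (a / (a + b)) := by
    have hexp : b / (a + b) = 1 - a / (a + b) := by field
    rw [← rpow_mul (by positivity), one_div_mul_eq_div, div_rpow hB.le hA.le, hexp,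
      rpow_sub hA, rpow_one]
    field
  have hsnd : B * ((B / A) ^ (1 / (a + b))) ^ (-b) = A ^ (b / (a + b)) * B ^ (a / (a + b)) := by
    have hexp : a / (a + b) = 1 - b / (a + b) := by field
    rw [rpow_neg (by positivity), ← rpow_mul (by positivity), one_div_mul_eq_div,
      div_rpow hB.le hA.le, hexp, rpow_sub hB, rpow_one]
    field
  linarith

lemma le_two_mul_rpow_mul_rpow_of_forall_le {U A B a b : ℝ} (hA : 0 ≤ A) (hB : 0 ≤ B)
    (ha : 0 < a) (hb : 0 < b) (h : ∀ r, 0 < r → U ≤ A * r ^ a + B * r ^ (-b)) :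
    U ≤ 2 * (A ^ (b / (a + b)) * B ^ (a / (a + b))) := by
  have hcont : Continuous fun ε : ℝ ↦
      2 * ((A + ε) ^ (b / (a + b)) * (B + ε) ^ (a / (a + b))) := by
    refine continuous_const.mul (.mul ?_ ?_) <;>
      exact .rpow_const (by fun_prop) fun _ ↦ .inr (by positivity)
  have hlim := (hcont.tendsto 0).mono_left (nhdsWithin_le_nhds (s := Set.Ioi 0))
  simp only [add_zero] at hlim
  refine ge_of_tendsto hlim (eventually_nhdsWithin_of_forall fun ε (hε : 0 < ε) ↦ ?_)
  refine le_two_mul_rpow_mul_rpow_of_forall_le_of_pos (by positivity) (by positivity) ha hb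
    fun r hr ↦ (h r hr).trans ?_
  gcongr <;> linarith

end RealAnalysis

section Translation

lemma rpow_lintegral_le_lintegral_rpow {α : Type*} {_ : MeasurableSpace α} {μ : Measure α}
    [IsProbabilityMeasure μ] {f : α → ℝ≥0∞} (hf : AEMeasurable f μ) {p : ℝ} (hp : 1 ≤ p) :
    (∫⁻ x, f x ∂μ) ^ p ≤ ∫⁻ x, f x ^ p ∂μ := by
  have hp₀ : 0 < p := by positivity
  have h := eLpNorm'_le_eLpNorm'_of_exponent_le one_pos hp μ hf.aestronglyMeasurable
  simp only [eLpNorm', enorm_eq_self, ENNReal.rpow_one, div_one] at h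
  rwa [← ENNReal.le_rpow_inv_iff hp₀, ← one_div]

lemma integral_norm_sq_eq_toReal_lintegral {α F : Type*} [NormedAddCommGroup F]
    {_ : MeasurableSpace α} {μ : Measure α} {f : α → F} (hf : AEStronglyMeasurable f μ) :
    ∫ x, ‖f x‖ ^ 2 ∂μ = (∫⁻ x, ‖f x‖ₑ ^ (2 : ℝ) ∂μ).toReal := by
  rw [integral_eq_lintegral_of_nonneg_ae (.of_forall fun x ↦ by positivity) (by fun_prop)]
  simp [ENNReal.ofReal_pow]

variable {E F : Type*} [NormedAddCommGroup E] [NormedSpace ℝ E]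
  [NormedAddCommGroup F] [NormedSpace ℝ F] [CompleteSpace F]

lemma enorm_sub_le_lintegral_enorm_deriv {f : ℝ → F} (hf : Differentiable ℝ f)
    {a b : ℝ} (hab : a ≤ b) : ‖f b - f a‖ₑ ≤ ∫⁻ t in Set.Ioc a b, ‖deriv f t‖ₑ := by
  by_cases hint : IntegrableOn (deriv f) (Set.Ioc a b)
  · have hftc : ∫ t in Set.Ioc a b, deriv f t = f b - f a := by
      rw [← intervalIntegral.integral_of_le hab]
      exact intervalIntegral.integral_deriv_eq_sub (fun t _ ↦ hf t)
        ((intervalIntegrable_iff_integrableOn_Ioc_of_le hab).2 hint)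
    exact hftc ▸ enorm_integral_le_lintegral_enorm _
  · have htop : ∫⁻ t in Set.Ioc a b, ‖deriv f t‖ₑ = ∞ := by
      by_contra hne
      exact hint ⟨(stronglyMeasurable_deriv f).aestronglyMeasurable, lt_top_iff_ne_top.2 hne⟩
    exact htop ▸ le_top

lemma enorm_sub_rpow_le_lintegral_segment {u : E → F} (hu : Differentiable ℝ u)
    (x z : E) {p : ℝ} (hp : 1 ≤ p) :
    ‖u (x + z) - u x‖ₑ ^ p ≤
      ∫⁻ t in Set.Ioc (0 : ℝ) 1, (‖z‖ₑ * ‖fderiv ℝ u (x + t • z)‖ₑ) ^ p := by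
  have : IsProbabilityMeasure (volume.restrict (Set.Ioc (0 : ℝ) 1)) := ⟨by simp⟩
  have hderiv (t : ℝ) :
      HasDerivAt (fun t : ℝ ↦ u (x + t • z)) (fderiv ℝ u (x + t • z) z) t := by
    refine (hu (x + t • z)).hasFDerivAt.comp_hasDerivAt t ?_
    simpa using ((hasDerivAt_id t).smul_const z).const_add x
  have hdiff : Differentiable ℝ fun t : ℝ ↦ u (x + t • z) := fun t ↦ (hderiv t).differentiableAt
  calc ‖u (x + z) - u x‖ₑ ^ p
      ≤ (∫⁻ t in Set.Ioc (0 : ℝ) 1, ‖deriv (fun t : ℝ ↦ u (x + t • z)) t‖ₑ) ^ p := by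
        gcongr
        simpa using enorm_sub_le_lintegral_enorm_deriv hdiff zero_le_one
    _ ≤ ∫⁻ t in Set.Ioc (0 : ℝ) 1, ‖deriv (fun t : ℝ ↦ u (x + t • z)) t‖ₑ ^ p :=
        rpow_lintegral_le_lintegral_rpow
          (stronglyMeasurable_deriv _).enorm.aemeasurable hp
    _ ≤ ∫⁻ t in Set.Ioc (0 : ℝ) 1, (‖z‖ₑ * ‖fderiv ℝ u (x + t • z)‖ₑ) ^ p := by
        refine lintegral_mono fun t ↦ ?_
        gcongr
        rw [(hderiv t).deriv, mul_comm]
        exact (fderiv ℝ u (x + t • z)).le_opENorm z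

variable [MeasurableSpace E] [BorelSpace E] [SecondCountableTopology E]
  {μ : Measure E} [SFinite μ] [μ.IsAddLeftInvariant]

lemma lintegral_enorm_translate_sub_rpow_le {u : E → F}
    (hu : Differentiable ℝ u) (z : E) {p : ℝ} (hp : 1 ≤ p) :
    ∫⁻ x, ‖u (x + z) - u x‖ₑ ^ p ∂μ ≤ ‖z‖ₑ ^ p * ∫⁻ x, ‖fderiv ℝ u x‖ₑ ^ p ∂μ := by
  have hmeas : Measurable fun x ↦ ‖fderiv ℝ u x‖ₑ := (measurable_fderiv ℝ u).enorm
  calc ∫⁻ x, ‖u (x + z) - u x‖ₑ ^ p ∂μ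
      ≤ ∫⁻ x, (∫⁻ t in Set.Ioc (0 : ℝ) 1, (‖z‖ₑ * ‖fderiv ℝ u (x + t • z)‖ₑ) ^ p) ∂μ :=
        lintegral_mono fun x ↦ enorm_sub_rpow_le_lintegral_segment hu x z hp
    _ = ∫⁻ t in Set.Ioc (0 : ℝ) 1, (∫⁻ x, (‖z‖ₑ * ‖fderiv ℝ u (x + t • z)‖ₑ) ^ p ∂μ) := by
        refine lintegral_lintegral_swap (Measurable.aemeasurable ?_)
        exact ((hmeas.comp (g := fun x ↦ ‖fderiv ℝ u x‖ₑ)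
          (f := fun q : E × ℝ ↦ q.1 + q.2 • z) (by fun_prop)).const_mul _).pow_const p
    _ = ∫⁻ x, (‖z‖ₑ * ‖fderiv ℝ u x‖ₑ) ^ p ∂μ := by
        simp_rw [lintegral_add_right_eq_self (μ := μ) fun x ↦ (‖z‖ₑ * ‖fderiv ℝ u x‖ₑ) ^ p]
        simp
    _ = ‖z‖ₑ ^ p * ∫⁻ x, ‖fderiv ℝ u x‖ₑ ^ p ∂μ := by
        simp_rw [ENNReal.mul_rpow_of_nonneg _ _ (zero_le_one.trans hp)]
        exact lintegral_const_mul _ (hmeas.pow_const p)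

lemma integral_norm_translate_sub_sq_le {u : E → F} (hu : Differentiable ℝ u)
    (hDu : MemLp (fderiv ℝ u) 2 μ) (z : E) :
    ∫ x, ‖u (x + z) - u x‖ ^ 2 ∂μ ≤ ‖z‖ ^ 2 * ∫ x, ‖fderiv ℝ u x‖ ^ 2 ∂μ := by
  have hfin : ∫⁻ x, ‖fderiv ℝ u x‖ₑ ^ (2 : ℝ) ∂μ ≠ ∞ := by
    simpa using (lintegral_rpow_enorm_lt_top_of_eLpNorm_lt_top two_ne_zero ENNReal.ofNat_ne_top
      hDu.2).ne
  have hcont : Continuous fun x ↦ u (x + z) - u x := by have := hu.continuous; fun_prop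
  rw [integral_norm_sq_eq_toReal_lintegral hcont.aestronglyMeasurable,
    integral_norm_sq_eq_toReal_lintegral hDu.1]
  have h := ENNReal.toReal_mono (ENNReal.mul_ne_top (by simp) hfin)
    (lintegral_enorm_translate_sub_rpow_le (μ := μ) hu z one_le_two)
  simpa using h

end Translation

section Correlation

variable {F : Type*} [NormedAddCommGroup F] [InnerProductSpace ℝ F]

lemma integral_norm_translate_sub_sq {G : Type*} [AddGroup G] [MeasurableSpace G]
    [MeasurableAdd G] {μ : Measure G} [μ.IsAddRightInvariant] {u : G → F} (hu : MemLp u 2 μ)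
    (z : G) :
    ∫ x, ‖u (x + z) - u x‖ ^ 2 ∂μ
      = 2 * (∫ x, ‖u x‖ ^ 2 ∂μ) - 2 * ∫ x, ⟪u x, u (x + z)⟫ ∂μ := by
  have huz : MemLp (fun x ↦ u (x + z)) 2 μ :=
    hu.comp_measurePreserving (measurePreserving_add_right μ z)
  have hsq : Integrable (fun x ↦ ‖u x‖ ^ 2) μ := hu.integrable_norm_pow two_ne_zero
  have hsqz : Integrable (fun x ↦ ‖u (x + z)‖ ^ 2) μ := huz.integrable_norm_pow two_ne_zero
  have hinner : Integrable (fun x ↦ ⟪u x, u (x + z)⟫) μ :=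
    (hu.norm.integrable_mul huz.norm).mono' (hu.1.inner huz.1)
      (.of_forall fun _ ↦ norm_inner_le_norm _ _)
  have hexpand (x : G) : ‖u (x + z) - u x‖ ^ 2
      = (‖u (x + z)‖ ^ 2 + ‖u x‖ ^ 2) - 2 * ⟪u x, u (x + z)⟫ := by
    rw [norm_sub_sq_real, real_inner_comm]
    ring
  simp_rw [hexpand]
  rw [integral_sub (by fun_prop) (by fun_prop), integral_add hsqz hsq, integral_const_mul,
    integral_add_right_eq_self (fun x ↦ ‖u x‖ ^ 2) z]
  ring

variable {E : Type*} [NormedAddCommGroup E] [NormedSpace ℝ E]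
  [MeasurableSpace E] [BorelSpace E] [SecondCountableTopology E]
  {μ : Measure E} [SFinite μ] [μ.IsAddLeftInvariant]

lemma sub_le_integral_inner_translate [CompleteSpace F] {u : E → F} (hu : Differentiable ℝ u)
    (hu₂ : MemLp u 2 μ) (hDu : MemLp (fderiv ℝ u) 2 μ) (z : E) :
    (∫ x, ‖u x‖ ^ 2 ∂μ) - ‖z‖ ^ 2 / 2 * ∫ x, ‖fderiv ℝ u x‖ ^ 2 ∂μ
      ≤ ∫ x, ⟪u x, u (x + z)⟫ ∂μ := by
  linarith [integral_norm_translate_sub_sq_le hu hDu z, integral_norm_translate_sub_sq hu₂ z]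

end Correlation

section Mollifier

lemma norm_mixed_difference_le_of_lipschitzWith_fderiv {E F : Type*} [NormedAddCommGroup E]
    [NormedSpace ℝ E] [NormedAddCommGroup F] [NormedSpace ℝ F] {φ : E → F} {K : NNReal}
    (hφ : Differentiable ℝ φ) (hK : LipschitzWith K (fderiv ℝ φ)) (a x y : E) :
    ‖φ (a + x + y) - φ (a + x) - (φ (a + y) - φ a)‖ ≤ K * ‖x‖ * ‖y‖ := by
  have hderiv (v : E) : HasFDerivAt (fun v ↦ φ (v + y) - φ v)
      (fderiv ℝ φ (v + y) - fderiv ℝ φ v) v :=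
    ((hasFDerivAt_comp_add_right y).2 (hφ (v + y)).hasFDerivAt).sub (hφ v).hasFDerivAt
  have hbound (v : E) : ‖fderiv ℝ φ (v + y) - fderiv ℝ φ v‖ ≤ K * ‖y‖ := by
    simpa [dist_eq_norm] using hK.dist_le_mul (v + y) v
  calc ‖φ (a + x + y) - φ (a + x) - (φ (a + y) - φ a)‖ ≤ K * ‖y‖ * ‖a + x - a‖ :=
        convex_univ.norm_image_sub_le_of_norm_hasFDerivWithin_le
          (fun v _ ↦ (hderiv v).hasFDerivWithinAt) (fun v _ ↦ hbound v) trivial trivial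
    _ = K * ‖x‖ * ‖y‖ := by rw [add_sub_cancel_left]; ring

variable {E : Type*} [NormedAddCommGroup E] [MeasurableSpace E]

/-- `IsMollifier μ r K φ` says that `φ` is a continuous probability density for `μ`, supported in
the closed ball of radius `r` about the origin. Its smoothness enters only through the mixed
second differences at the origin, which `K` controls. -/
structure IsMollifier (μ : Measure E) (r K : ℝ) (φ : E → ℝ) : Prop where
  continuous : Continuous φ
  nonneg : ∀ z, 0 ≤ φ z
  integral_eq_one : ∫ z, φ z ∂μ = 1
  support_subset : support φ ⊆ closedBall 0 r
  abs_mixed_difference_le : ∀ x y, |φ (y - x) - φ (-x) - (φ y - φ 0)| ≤ K * ‖x‖ * ‖y‖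

namespace IsMollifier

variable {μ : Measure E} {r K : ℝ} {φ : E → ℝ}

lemma integrable (hφ : IsMollifier μ r K φ) : Integrable φ μ :=
  .of_integral_ne_zero (by simp [hφ.integral_eq_one])

lemma norm_le_of_apply_ne_zero (hφ : IsMollifier μ r K φ) {z : E} (hz : φ z ≠ 0) : ‖z‖ ≤ r :=
  mem_closedBall_zero_iff.1 (hφ.support_subset hz)

lemma exists_norm_le [ProperSpace E] (hφ : IsMollifier μ r K φ) : ∃ B, ∀ z, ‖φ z‖ ≤ B :=
  (HasCompactSupport.of_support_subset_isCompact (isCompact_closedBall 0 r)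
    hφ.support_subset).exists_bound_of_continuous hφ.continuous

variable [NormedSpace ℝ E] [FiniteDimensional ℝ E] [BorelSpace E] [μ.IsAddHaarMeasure]

lemma rescale {ρ : ℝ} (hφ : IsMollifier μ ρ K φ) (hr : 0 < r) :
    IsMollifier μ (r * ρ) (K * (r ^ (finrank ℝ E + 2))⁻¹)
      (fun z ↦ (r ^ finrank ℝ E)⁻¹ * φ (r⁻¹ • z)) where
  continuous := by have := hφ.continuous; fun_prop
  nonneg z := mul_nonneg (by positivity) (hφ.nonneg _)
  integral_eq_one := by
    rw [integral_const_mul, Measure.integral_comp_inv_smul_of_nonneg μ φ hr.le,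
      hφ.integral_eq_one, smul_eq_mul, mul_one, inv_mul_cancel₀ (by positivity)]
  support_subset z hz := by
    have h := hφ.norm_le_of_apply_ne_zero (right_ne_zero_of_mul hz)
    rwa [norm_smul, norm_inv, norm_of_nonneg hr.le, inv_mul_le_iff₀ hr,
      ← mem_closedBall_zero_iff] at h
  abs_mixed_difference_le x y := by
    simp only [smul_sub, smul_neg, smul_zero, ← mul_sub]
    rw [abs_mul, abs_of_pos (by positivity : 0 < (r ^ finrank ℝ E)⁻¹)]
    calc _ ≤ (r ^ finrank ℝ E)⁻¹ * (K * ‖r⁻¹ • x‖ * ‖r⁻¹ • y‖) := by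
          gcongr
          exact hφ.abs_mixed_difference_le _ _
      _ = K * (r ^ (finrank ℝ E + 2))⁻¹ * ‖x‖ * ‖y‖ := by
          rw [norm_smul, norm_smul, norm_inv, norm_of_nonneg hr.le, pow_add]
          field

variable (μ) in
lemma exists_radius_one : ∃ K, 0 < K ∧ ∃ φ, IsMollifier μ 1 K φ := by
  let b : ContDiffBump (0 : E) := ⟨1 / 2, 1, by norm_num, by norm_num⟩
  have hb : ContDiff ℝ 2 (b.normed μ) := b.contDiff_normed (n := 2)
  obtain ⟨K, hK⟩ := ContDiff.lipschitzWith_of_hasCompactSupport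
    (b.hasCompactSupport_normed.fderiv ℝ) (hb.fderiv_right (m := 1) (by norm_num)) one_ne_zero
  refine ⟨K + 1, by positivity, b.normed μ, hb.continuous, b.nonneg_normed, b.integral_normed,
    b.support_normed_eq.trans_subset ball_subset_closedBall, fun x y ↦ ?_⟩
  calc _ ≤ K * ‖-x‖ * ‖y‖ := by
        simpa [neg_add_eq_sub] using norm_mixed_difference_le_of_lipschitzWith_fderiv
          (hb.differentiable two_ne_zero) hK 0 (-x) y
    _ ≤ (K + 1) * ‖x‖ * ‖y‖ := by
        rw [norm_neg]
        gcongr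
        exact le_add_of_nonneg_right zero_le_one

end IsMollifier

end Mollifier

section DoubleIntegral

variable {F : Type*} [NormedAddCommGroup F] [InnerProductSpace ℝ F]

section MeasureSpace

variable {α : Type*} [MeasurableSpace α] {μ : Measure α}

lemma integrable_prod_inner {f g : α → F} (hf : Integrable f μ) (hg : Integrable g μ) :
    Integrable (fun q : α × α ↦ ⟪f q.1, g q.2⟫) (μ.prod μ) :=
  hf.op_fst_snd continuous_inner ⟨1, by simpa using norm_inner_le_norm (𝕜 := ℝ)⟩ hg

variable [SFinite μ]

lemma integral_prod_inner [CompleteSpace F] {f g : α → F} (hf : Integrable f μ)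
    (hg : Integrable g μ) :
    ∫ q, ⟪f q.1, g q.2⟫ ∂μ.prod μ = ⟪∫ x, f x ∂μ, ∫ y, g y ∂μ⟫ :=
  integral_prod_bilin (innerSL ℝ) hf hg

lemma integral_sub_sub_mul_inner_of_integral_eq_zero [CompleteSpace F] {u : α → F}
    (hu : Integrable u μ) (hu₀ : ∫ x, u x ∂μ = 0) {k : α × α → ℝ} {f g : α → ℝ}
    (hk : Integrable (fun q ↦ k q * ⟪u q.1, u q.2⟫) (μ.prod μ))
    (hf : Integrable (fun x ↦ f x • u x) μ) (hg : Integrable (fun y ↦ g y • u y) μ) :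
    ∫ q, (k q - f q.1 - g q.2) * ⟪u q.1, u q.2⟫ ∂μ.prod μ
      = ∫ q, k q * ⟪u q.1, u q.2⟫ ∂μ.prod μ := by
  have hexpand (q : α × α) : (k q - f q.1 - g q.2) * ⟪u q.1, u q.2⟫
      = k q * ⟪u q.1, u q.2⟫ - ⟪f q.1 • u q.1, u q.2⟫ - ⟪u q.1, g q.2 • u q.2⟫ := by
    rw [real_inner_smul_left, real_inner_smul_right]
    ring
  simp_rw [hexpand]
  have hfst := integrable_prod_inner hf hu
  have hsnd := integrable_prod_inner hu hg
  rw [integral_sub (by fun_prop) hsnd, integral_sub hk hfst, integral_prod_inner hf hu,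
    integral_prod_inner hu hg, hu₀, inner_zero_left, inner_zero_right, sub_zero, sub_zero]

end MeasureSpace

lemma integral_mul_inner_le_of_abs_le {E : Type*} [NormedAddCommGroup E] [MeasurableSpace E]
    {μ : Measure E} [SFinite μ] {u : E → F} (hxu : Integrable (fun x ↦ ‖x‖ * ‖u x‖) μ)
    {k : E × E → ℝ} {K : ℝ} (hk : ∀ q, |k q| ≤ K * ‖q.1‖ * ‖q.2‖) :
    ∫ q, k q * ⟪u q.1, u q.2⟫ ∂μ.prod μ ≤ K * (∫ x, ‖x‖ * ‖u x‖ ∂μ) ^ 2 := by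
  have hbound (q : E × E) : ‖k q * ⟪u q.1, u q.2⟫‖
      ≤ K * ((‖q.1‖ * ‖u q.1‖) * (‖q.2‖ * ‖u q.2‖)) := by
    calc ‖k q * ⟪u q.1, u q.2⟫‖ = |k q| * |⟪u q.1, u q.2⟫| := abs_mul _ _
      _ ≤ (K * ‖q.1‖ * ‖q.2‖) * (‖u q.1‖ * ‖u q.2‖) := by
          gcongr
          · exact (abs_nonneg _).trans (hk q)
          · exact hk q
          · exact abs_real_inner_le_norm _ _
      _ = K * ((‖q.1‖ * ‖u q.1‖) * (‖q.2‖ * ‖u q.2‖)) := by ring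
  calc ∫ q, k q * ⟪u q.1, u q.2⟫ ∂μ.prod μ
      ≤ ∫ q, K * ((‖q.1‖ * ‖u q.1‖) * (‖q.2‖ * ‖u q.2‖)) ∂μ.prod μ :=
        (le_norm_self _).trans (norm_integral_le_of_norm_le ((hxu.mul_prod hxu).const_mul K)
          (.of_forall hbound))
    _ = K * (∫ x, ‖x‖ * ‖u x‖ ∂μ) ^ 2 := by
        rw [integral_const_mul, integral_prod_mul (fun x ↦ ‖x‖ * ‖u x‖) fun x ↦ ‖x‖ * ‖u x‖, sq]

namespace IsMollifier

variable {E : Type*} [NormedAddCommGroup E] [MeasurableSpace E] [BorelSpace E] [ProperSpace E]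
  {μ : Measure E} {r K : ℝ} {φ : E → ℝ} {u : E → F}

lemma integrable_mul_inner (hφ : IsMollifier μ r K φ) (hu : Integrable u μ) :
    Integrable (fun q : E × E ↦ φ (q.2 - q.1) * ⟪u q.1, u q.2⟫) (μ.prod μ) := by
  obtain ⟨B, hB⟩ := hφ.exists_norm_le
  have := hφ.continuous
  exact (integrable_prod_inner hu hu).bdd_mul (c := B)
    (Continuous.aestronglyMeasurable (by fun_prop)) (.of_forall fun _ ↦ hB _)

variable [SFinite μ]

lemma integral_mul_inner_le_mul_sq [CompleteSpace F] (hφ : IsMollifier μ r K φ)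
    (hu : Integrable u μ) (hxu : Integrable (fun x ↦ ‖x‖ * ‖u x‖) μ) (hu₀ : ∫ x, u x ∂μ = 0) :
    ∫ q, φ (q.2 - q.1) * ⟪u q.1, u q.2⟫ ∂μ.prod μ ≤ K * (∫ x, ‖x‖ * ‖u x‖ ∂μ) ^ 2 := by
  obtain ⟨B, hB⟩ := hφ.exists_norm_le
  have hcont := hφ.continuous
  have hneg : Integrable (fun x ↦ φ (-x) • u x) μ :=
    hu.bdd_smul B (hcont.comp continuous_neg).aestronglyMeasurable (.of_forall fun _ ↦ hB _)
  have hsub : Integrable (fun y ↦ (φ y - φ 0) • u y) μ := by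
    simp_rw [sub_smul]
    exact (hu.bdd_smul B hcont.aestronglyMeasurable (.of_forall hB)).sub (hu.smul _)
  rw [← integral_sub_sub_mul_inner_of_integral_eq_zero hu hu₀ (hφ.integrable_mul_inner hu) hneg
    hsub]
  exact integral_mul_inner_le_of_abs_le hxu fun q ↦ hφ.abs_mixed_difference_le q.1 q.2

variable [μ.IsAddLeftInvariant]

lemma integrable_mul_inner_translate (hφ : IsMollifier μ r K φ) (hu : Integrable u μ) :
    Integrable (fun q : E × E ↦ φ q.2 * ⟪u q.1, u (q.1 + q.2)⟫) (μ.prod μ) := by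
  simpa [Function.comp_def] using
    (measurePreserving_prod_add μ μ).integrable_comp_of_integrable (hφ.integrable_mul_inner hu)

lemma integral_mul_inner_eq_integral_translate (hφ : IsMollifier μ r K φ) (hu : Integrable u μ) :
    ∫ q, φ (q.2 - q.1) * ⟪u q.1, u q.2⟫ ∂μ.prod μ
      = ∫ z, φ z * ∫ x, ⟪u x, u (x + z)⟫ ∂μ ∂μ := by
  have hshear : MeasurableEmbedding fun q : E × E ↦ (q.1, q.1 + q.2) :=
    (MeasurableEquiv.shearAddRight E).measurableEmbedding
  rw [← (measurePreserving_prod_add μ μ).integral_comp hshear]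
  simp_rw [add_sub_cancel_left]
  rw [integral_prod_symm _ (hφ.integrable_mul_inner_translate hu)]
  simp_rw [integral_const_mul]

variable [NormedSpace ℝ E]

lemma sub_le_integral_mul_inner [CompleteSpace F] (hφ : IsMollifier μ r K φ)
    (hu : Differentiable ℝ u) (hu₁ : Integrable u μ) (hu₂ : MemLp u 2 μ)
    (hDu : MemLp (fderiv ℝ u) 2 μ) :
    (∫ x, ‖u x‖ ^ 2 ∂μ) - r ^ 2 / 2 * ∫ x, ‖fderiv ℝ u x‖ ^ 2 ∂μ
      ≤ ∫ q, φ (q.2 - q.1) * ⟪u q.1, u q.2⟫ ∂μ.prod μ := by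
  set S := ∫ x, ‖u x‖ ^ 2 ∂μ
  set T := ∫ x, ‖fderiv ℝ u x‖ ^ 2 ∂μ
  have hpointwise (z : E) : φ z * (S - r ^ 2 / 2 * T) ≤ φ z * ∫ x, ⟪u x, u (x + z)⟫ ∂μ := by
    obtain hz | hz := eq_or_ne (φ z) 0
    · simp [hz]
    have : 0 ≤ T := integral_nonneg fun x ↦ by positivity
    have hzr : ‖z‖ ≤ r := hφ.norm_le_of_apply_ne_zero hz
    refine mul_le_mul_of_nonneg_left ?_ (hφ.nonneg z)
    calc S - r ^ 2 / 2 * T ≤ S - ‖z‖ ^ 2 / 2 * T := by gcongr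
      _ ≤ ∫ x, ⟪u x, u (x + z)⟫ ∂μ := sub_le_integral_inner_translate hu hu₂ hDu z
  have hint : Integrable (fun z ↦ φ z * ∫ x, ⟪u x, u (x + z)⟫ ∂μ) μ := by
    simpa [integral_const_mul] using (hφ.integrable_mul_inner_translate hu₁).integral_prod_right
  calc S - r ^ 2 / 2 * T = ∫ z, φ z * (S - r ^ 2 / 2 * T) ∂μ := by
        rw [integral_mul_const, hφ.integral_eq_one, one_mul]
    _ ≤ ∫ z, φ z * ∫ x, ⟪u x, u (x + z)⟫ ∂μ ∂μ :=
        integral_mono (hφ.integrable.mul_const _) hint hpointwise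
    _ = ∫ q, φ (q.2 - q.1) * ⟪u q.1, u q.2⟫ ∂μ.prod μ :=
        (hφ.integral_mul_inner_eq_integral_translate hu₁).symm

end IsMollifier

end DoubleIntegral

section Nash

variable {E F : Type*} [NormedAddCommGroup E] [NormedSpace ℝ E] [FiniteDimensional ℝ E]
  [MeasurableSpace E] [BorelSpace E] (μ : Measure E) [μ.IsAddHaarMeasure]
  [NormedAddCommGroup F] [InnerProductSpace ℝ F] [CompleteSpace F]

lemma exists_forall_integral_norm_sq_le :
    ∃ K : ℝ, 0 < K ∧ ∀ u : E → F, Differentiable ℝ u → MemLp u 2 μ → MemLp (fderiv ℝ u) 2 μ →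
      Integrable u μ → Integrable (fun x ↦ ‖x‖ * ‖u x‖) μ → ∫ x, u x ∂μ = 0 →
      ∀ r : ℝ, 0 < r → ∫ x, ‖u x‖ ^ 2 ∂μ ≤ r ^ 2 / 2 * (∫ x, ‖fderiv ℝ u x‖ ^ 2 ∂μ)
        + K * (r ^ (finrank ℝ E + 2))⁻¹ * (∫ x, ‖x‖ * ‖u x‖ ∂μ) ^ 2 := by
  have : ProperSpace E := FiniteDimensional.proper_real E
  obtain ⟨K, hK, φ, hφ⟩ := IsMollifier.exists_radius_one μ
  refine ⟨K, hK, fun u hu hu₂ hDu hu₁ hxu hu₀ r hr ↦ ?_⟩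
  have hφr := mul_one r ▸ hφ.rescale hr
  linarith [hφr.sub_le_integral_mul_inner hu hu₁ hu₂ hDu,
    hφr.integral_mul_inner_le_mul_sq hu₁ hxu hu₀]

theorem stmt_12_general :
    ∃ C : ℝ, 0 < C ∧ ∀ u : E → F, Differentiable ℝ u → MemLp u 2 μ → MemLp (fderiv ℝ u) 2 μ →
      Integrable u μ → Integrable (fun x ↦ ‖x‖ * ‖u x‖) μ → ∫ x, u x ∂μ = 0 →
      ∫ x, ‖u x‖ ^ 2 ∂μ ≤ C * (∫ x, ‖x‖ * ‖u x‖ ∂μ) ^ (4 / (finrank ℝ E + 4) : ℝ)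
        * (∫ x, ‖fderiv ℝ u x‖ ^ 2 ∂μ) ^ ((finrank ℝ E + 2) / (finrank ℝ E + 4) : ℝ) := by
  obtain ⟨K, hK, hscale⟩ := exists_forall_integral_norm_sq_le (F := F) μ
  set n : ℝ := (finrank ℝ E : ℝ) with hn
  have : 0 ≤ n := Nat.cast_nonneg _
  refine ⟨2 * (2⁻¹ ^ ((n + 2) / (n + 4)) * K ^ (2 / (n + 4))), by positivity,
    fun u hu hu₂ hDu hu₁ hxu hu₀ ↦ ?_⟩
  have hscale_u := hscale u hu hu₂ hDu hu₁ hxu hu₀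
  set M := ∫ x, ‖x‖ * ‖u x‖ ∂μ
  set T := ∫ x, ‖fderiv ℝ u x‖ ^ 2 ∂μ
  have hM : 0 ≤ M := integral_nonneg fun x ↦ by positivity
  have hT : 0 ≤ T := integral_nonneg fun x ↦ by positivity
  calc ∫ x, ‖u x‖ ^ 2 ∂μ
      ≤ 2 * ((2⁻¹ * T) ^ ((n + 2) / (2 + (n + 2))) * (K * M ^ 2) ^ (2 / (2 + (n + 2)))) := by
        refine le_two_mul_rpow_mul_rpow_of_forall_le (by positivity) (by positivity) two_pos
          (by positivity) fun r hr ↦ (hscale_u r hr).trans_eq ?_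
        rw [rpow_neg hr.le, hn]
        norm_cast
        ring
    _ = 2 * (2⁻¹ ^ ((n + 2) / (n + 4)) * K ^ (2 / (n + 4))) * M ^ (4 / (n + 4))
          * T ^ ((n + 2) / (n + 4)) := by
        have hden : 2 + (n + 2) = n + 4 := by ring
        have hexp : 2 * (2 / (n + 4)) = 4 / (n + 4) := by ring
        rw [hden, mul_rpow (by positivity) hT, mul_rpow hK.le (by positivity), ← rpow_two,
          ← rpow_mul hM, hexp]
        ring

end Nash

/-- Improved Nash inequality: there is C⋆ = C⋆(d) > 0 such that for every
u ∈ H¹(ℝ^d) ∩ L¹((1+|x|)dx) with ∫ u dx = 0,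
‖u‖²_{L²} ≤ C⋆ ‖x u‖_{L¹}^{4/(d+4)} ‖∇u‖_{L²}^{2(d+2)/(d+4)}. -/
theorem stmt_12 (d : ℕ) (hd : 0 < d) :
    ∃ C : ℝ, 0 < C ∧
      ∀ u : EuclideanSpace ℝ (Fin d) → ℝ,
        Differentiable ℝ u →
        Integrable (fun x => u x ^ 2) →
        Integrable (fun x => ‖gradient u x‖ ^ 2) →
        Integrable u →
        Integrable (fun x => ‖x‖ * |u x|) →
        (∫ x, u x) = 0 →
        (∫ x, u x ^ 2) ≤
          C * (∫ x, ‖x‖ * |u x|) ^ ((4 : ℝ) / ((d : ℝ) + 4))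
            * (∫ x, ‖gradient u x‖ ^ 2) ^ (((d : ℝ) + 2) / ((d : ℝ) + 4)) := by
  obtain ⟨C, hC, h⟩ := stmt_12_general (volume : Measure (EuclideanSpace ℝ (Fin d))) (F := ℝ)
  refine ⟨C, hC, fun u hu hu₂ hDu hu₁ hxu hu₀ ↦ ?_⟩
  have hgrad (x) : ‖gradient u x‖ = ‖fderiv ℝ u x‖ := LinearIsometryEquiv.norm_map _ _
  simp only [hgrad] at hDu ⊢
  simpa using h u hu ((memLp_two_iff_integrable_sq hu₁.1).2 hu₂)
    ((memLp_two_iff_integrable_sq_norm (measurable_fderiv ℝ u).aestronglyMeasurable).2 hDu)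
    hu₁ hxu hu₀
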